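/- arXiv:1607.03084 — 3 statements merged into one kernel-verified Lean document; each statement's English description precedes it below -/
import Mathlib

section
/- Let 0 < ε < 1/2 and let f(x) = (1/Z)·exp(−V(x)) be an ε-approximately log-concave probability density on ℝⁿ, where V : ℝⁿ → [0,∞) satisfies V* := min_{x∈ℝⁿ} V(x) = 0. Then for every x ∈ ℝⁿ: ‖x − μ(f)‖_{Cov(f)^{-1}} ≤ (e¹⁵/ε²)·( V(x) − V* + 1/ε² + 7n(1 + log(n/ε)) ). -/
open MeasureTheory ProbabilityTheory Real

noncomputable section

/-- A nonnegative function `g` is log-concave if it satisfies the pointwise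
multiplicative concavity inequality (equivalently, `g = exp` of a concave
function, with the value `0 = exp (-∞)` allowed). -/
def IsLogConcave {E : Type*} [AddCommMonoid E] [SMul ℝ E] (g : E → ℝ) : Prop :=
  (∀ x, 0 ≤ g x) ∧
    ∀ x y : E, ∀ a b : ℝ, 0 ≤ a → 0 ≤ b → a + b = 1 →
      g x ^ a * g y ^ b ≤ g (a • x + b • y)

/-- A density `p` is `ε`-approximately log-concave if there is a log-concave
function `g` with `ε • g ≤ p ≤ (1/ε) • g` pointwise. -/
def ApproxLogConcave {E : Type*} [AddCommMonoid E] [SMul ℝ E] (ε : ℝ) (p : E → ℝ) : Prop :=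
  ∃ g : E → ℝ, IsLogConcave g ∧ ∀ x, ε * g x ≤ p x ∧ p x ≤ (1 / ε) * g x

/-- Mean (barycenter) of the probability density `p` on `ℝⁿ`. -/
def densMean (n : ℕ) (p : EuclideanSpace ℝ (Fin n) → ℝ) : EuclideanSpace ℝ (Fin n) :=
  ∫ x, p x • x

/-- Covariance matrix of the probability density `p` on `ℝⁿ`. -/
def densCov (n : ℕ) (p : EuclideanSpace ℝ (Fin n) → ℝ) : Matrix (Fin n) (Fin n) ℝ :=
  Matrix.of fun i j => ∫ x, p x * ((x i - densMean n p i) * (x j - densMean n p j))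

/-- The (Mahalanobis-type) norm `‖x‖_A = √(xᵀ A x)` associated with a matrix `A`. -/
def mahal (n : ℕ) (A : Matrix (Fin n) (Fin n) ℝ) (x : EuclideanSpace ℝ (Fin n)) : ℝ :=
  Real.sqrt (∑ i, ∑ j, x i * A i j * x j)

/-- Density of the Gaussian measure `N(μ, S)` on `ℝⁿ`. -/
def gaussPdf (n : ℕ) (μ : EuclideanSpace ℝ (Fin n)) (S : Matrix (Fin n) (Fin n) ℝ)
    (x : EuclideanSpace ℝ (Fin n)) : ℝ :=
  (2 * π) ^ (-(n : ℝ) / 2) * S.det ^ (-(1 : ℝ) / 2) *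
    Real.exp (-(1 / 2) * ∑ i, ∑ j, (x i - μ i) * S⁻¹ i j * (x j - μ j))

/-!
Let `T` be the homothety with centre `x` and ratio `r`. Approximate log-concavity along the segments
from `x` gives `p ∘ T ≥ ε² (p x / sup p)^(1 - r) p`, so the image under `T` of the measure `ν` with
density `p`, scaled by `c = ε² (p x / sup p)^(1 - r) rⁿ`, is at most `ν`. Integrating `(ℓ - ν[ℓ])²`
for a linear functional `ℓ`, and using `(E W)² ≤ E W²` for `W = ℓ ∘ T - ν[ℓ]`, yields
`c ((1 - r) (ℓ x - ν[ℓ]))² ≤ Var[ℓ; ν]`. With `L = log (sup p / p x) + n` and `1 - r = 1 / (2 L)`,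
Bernoulli's inequality gives `c ≥ ε² / 2`, hence `|ℓ x - ν[ℓ]| ≤ 3 L / ε · √Var[ℓ; ν]`. Taking the
supremum over `ℓ` turns this into a bound on the Mahalanobis distance from `x` to the mean.
-/

namespace ApproxLogConcave

variable {E : Type*} {ε : ℝ} {p : E → ℝ}

section Pointwise

variable [AddCommMonoid E] [SMul ℝ E]

theorem nonneg (hp : ApproxLogConcave ε p) (hε : 0 ≤ ε) (x : E) : 0 ≤ p x := by
  obtain ⟨g, ⟨hg0, -⟩, hpg⟩ := hp
  exact (mul_nonneg hε (hg0 x)).trans (hpg x).1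

theorem sq_mul_rpow_mul_rpow_le (hp : ApproxLogConcave ε p) (hε : 0 < ε) {a b : ℝ}
    (ha : 0 ≤ a) (hb : 0 ≤ b) (hab : a + b = 1) (x y : E) :
    ε ^ 2 * (p x ^ a * p y ^ b) ≤ p (a • x + b • y) := by
  have hp0 := hp.nonneg hε.le
  obtain ⟨g, ⟨hg0, hg⟩, hpg⟩ := hp
  calc ε ^ 2 * (p x ^ a * p y ^ b)
      ≤ ε ^ 2 * ((1 / ε * g x) ^ a * (1 / ε * g y) ^ b) := by
        gcongr
        exacts [rpow_nonneg (hp0 y) b, rpow_nonneg ((hp0 x).trans (hpg x).2) a, hp0 x, (hpg x).2,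
          hp0 y, (hpg y).2]
    _ = ε ^ 2 * (1 / ε) ^ (a + b) * (g x ^ a * g y ^ b) := by
        rw [mul_rpow (by positivity) (hg0 x), mul_rpow (by positivity) (hg0 y),
          rpow_add (by positivity)]
        ring
    _ = ε * (g x ^ a * g y ^ b) := by
        rw [hab, rpow_one]
        field_simp
    _ ≤ ε * g (a • x + b • y) := by
        gcongr
        exact hg x y a b ha hb hab
    _ ≤ p (a • x + b • y) := (hpg _).1

end Pointwise

theorem sq_mul_rpow_mul_rpow_le_homothety [AddCommGroup E] [Module ℝ E]
    (hp : ApproxLogConcave ε p) (hε : 0 < ε) {r : ℝ} (hr : r ∈ Set.Icc (0 : ℝ) 1) (x y : E) :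
    ε ^ 2 * (p x ^ (1 - r) * p y ^ r) ≤ p (AffineMap.homothety x r y) := by
  rw [AffineMap.homothety_eq_lineMap, AffineMap.lineMap_apply_module]
  exact hp.sq_mul_rpow_mul_rpow_le hε (sub_nonneg.2 hr.2) hr.1 (sub_add_cancel 1 r) x y

theorem mul_le_homothety_of_le [AddCommGroup E] [Module ℝ E]
    (hp : ApproxLogConcave ε p) (hε : 0 < ε) {M : ℝ} (hM0 : 0 < M) (hM : ∀ y, p y ≤ M)
    {r : ℝ} (hr : r ∈ Set.Icc (0 : ℝ) 1) (x y : E) :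
    ε ^ 2 * (p x / M) ^ (1 - r) * p y ≤ p (AffineMap.homothety x r y) := by
  refine le_trans ?_ (hp.sq_mul_rpow_mul_rpow_le_homothety hε hr x y)
  have hpx := hp.nonneg hε.le x
  have hpy := hp.nonneg hε.le y
  have hr1 : 0 ≤ 1 - r := sub_nonneg.2 hr.2
  calc ε ^ 2 * (p x / M) ^ (1 - r) * p y
      = ε ^ 2 * ((p x / M) ^ (1 - r) * (p y ^ (1 - r) * p y ^ r)) := by
        rw [← rpow_add_of_nonneg hpy hr1 hr.1, sub_add_cancel, rpow_one, mul_assoc]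
    _ ≤ ε ^ 2 * ((p x / M) ^ (1 - r) * (M ^ (1 - r) * p y ^ r)) := by
        gcongr
        exact hM y
    _ = ε ^ 2 * (p x ^ (1 - r) * p y ^ r) := by
        rw [← mul_assoc (_ ^ (1 - r)), ← mul_rpow (by positivity) hM0.le,
          div_mul_cancel₀ _ hM0.ne']

end ApproxLogConcave

section Homothety

variable {E : Type*} [NormedAddCommGroup E] [NormedSpace ℝ E] [MeasurableSpace E] [BorelSpace E]

theorem measurableEmbedding_homothety (x : E) {r : ℝ} (hr : r ≠ 0) :
    MeasurableEmbedding (AffineMap.homothety x r : E → E) := by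
  have hemb : Topology.IsOpenEmbedding (AffineMap.homothety x r : E → E) :=
    .of_continuous_injective_isOpenMap (AffineMap.homothety_continuous x r)
      (AffineMap.homothety_injective x hr) (AffineMap.homothety_isOpenMap x r hr)
  exact hemb.measurableEmbedding

theorem lintegral_comp_homothety [FiniteDimensional ℝ E] (μ : Measure E) [μ.IsAddHaarMeasure]
    (F : E → ENNReal) (x : E) {r : ℝ} (hr : r ≠ 0) :
    ENNReal.ofReal |r ^ Module.finrank ℝ E| * ∫⁻ y, F (AffineMap.homothety x r y) ∂μ =
      ∫⁻ y, F y ∂μ := by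
  have hT := measurableEmbedding_homothety x hr
  have hmap : ENNReal.ofReal |r ^ Module.finrank ℝ E| •
      μ.map (AffineMap.homothety x r) = μ := by
    ext B hB
    rw [Measure.smul_apply, Measure.map_apply hT.measurable hB, smul_eq_mul,
      ← Measure.addHaar_image_homothety, Set.image_preimage_eq]
    exact fun y => ⟨AffineMap.homothety x r⁻¹ y, by
      rw [← AffineMap.homothety_mul_apply, mul_inv_cancel₀ hr]; simp⟩
  rw [← hT.lintegral_map, ← smul_eq_mul, ← lintegral_smul_measure, hmap]

theorem smul_map_homothety_withDensity_le [FiniteDimensional ℝ E] (μ : Measure E)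
    [μ.IsAddHaarMeasure] {p : E → ℝ} {κ : ℝ} (hκ : 0 ≤ κ) {x : E} {r : ℝ} (hr : 0 < r)
    (hp : ∀ y, κ * p y ≤ p (AffineMap.homothety x r y)) :
    ENNReal.ofReal (κ * r ^ Module.finrank ℝ E) •
        (μ.withDensity fun y => ENNReal.ofReal (p y)).map (AffineMap.homothety x r) ≤
      μ.withDensity fun y => ENNReal.ofReal (p y) := by
  set T := AffineMap.homothety x r
  set F : E → ENNReal := fun y => ENNReal.ofReal (p y) with hF
  set d := Module.finrank ℝ E
  have hT : Measurable T := (measurableEmbedding_homothety x hr.ne').measurable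
  have hκF : ∀ y, ENNReal.ofReal κ * F y ≤ F (T y) := fun y => by
    rw [hF, ← ENNReal.ofReal_mul hκ]
    exact ENNReal.ofReal_le_ofReal (hp y)
  refine Measure.le_iff.2 fun B hB => ?_
  rw [Measure.smul_apply, Measure.map_apply hT hB, withDensity_apply _ (hT hB),
    withDensity_apply _ hB, smul_eq_mul]
  calc ENNReal.ofReal (κ * r ^ d) * ∫⁻ y in T ⁻¹' B, F y ∂μ
      = ENNReal.ofReal (r ^ d) * ∫⁻ y in T ⁻¹' B, ENNReal.ofReal κ * F y ∂μ := by
        rw [lintegral_const_mul' _ _ ENNReal.ofReal_ne_top, mul_comm κ,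
          ENNReal.ofReal_mul (by positivity), mul_assoc]
    _ ≤ ENNReal.ofReal (r ^ d) * ∫⁻ y in T ⁻¹' B, F (T y) ∂μ := by
        gcongr with y
        exact hκF y
    _ = ENNReal.ofReal |r ^ d| * ∫⁻ y, B.indicator F (T y) ∂μ := by
        rw [abs_of_pos (by positivity), ← lintegral_indicator (hT hB)]
        rfl
    _ = ∫⁻ y in B, F y ∂μ := by
        rw [lintegral_comp_homothety μ _ x hr.ne', lintegral_indicator hB]

theorem mul_sq_apply_sub_integral_le_variance [CompleteSpace E] {ν : Measure E}
    [IsProbabilityMeasure ν] {c : ℝ} (hc : 0 ≤ c) {x : E} {r : ℝ}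
    (hν : ENNReal.ofReal c • ν.map (AffineMap.homothety x r) ≤ ν) (hmem : MemLp id 2 ν)
    (ℓ : StrongDual ℝ E) :
    c * ((1 - r) * ℓ (x - ∫ y, y ∂ν)) ^ 2 ≤ Var[ℓ; ν] := by
  have hℓ : MemLp ℓ 2 ν := ℓ.comp_memLp' hmem
  set m := ∫ y, y ∂ν
  have hℓm : ∫ y, ℓ y ∂ν = ℓ m := ℓ.integral_comp_comm (hmem.integrable one_le_two)
  have hT : Continuous (AffineMap.homothety x r : E → E) := AffineMap.homothety_continuous x r
  set W : E → ℝ := fun y => ℓ (AffineMap.homothety x r y) - ℓ m with hW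
  have hW_eq : W = fun y => r * ℓ y + ((1 - r) * ℓ x - ℓ m) := by
    ext y
    simp only [hW, AffineMap.homothety_apply, vsub_eq_sub, vadd_eq_add, map_add, map_smul, map_sub,
      smul_eq_mul]
    ring
  have hW_mem : MemLp W 2 ν := hW_eq ▸ (hℓ.const_mul r).add (memLp_const _)
  have hW_mean : ∫ y, W y ∂ν = (1 - r) * ℓ (x - m) := by
    rw [hW_eq, integral_add ((hℓ.integrable one_le_two).const_mul r) (integrable_const _),
      integral_const_mul, hℓm, integral_const, probReal_univ, one_smul, map_sub]
    ring
  calc c * ((1 - r) * ℓ (x - m)) ^ 2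
      = c * (∫ y, W y ∂ν) ^ 2 := by rw [hW_mean]
    _ ≤ c * ∫ y, W y ^ 2 ∂ν := by
        gcongr
        simpa [variance_eq_sub hW_mem] using variance_nonneg W ν
    _ = ∫ y, (ℓ y - ℓ m) ^ 2 ∂(ENNReal.ofReal c • ν.map (AffineMap.homothety x r)) := by
        rw [integral_smul_measure, ENNReal.toReal_ofReal hc, smul_eq_mul,
          integral_map hT.aemeasurable (by fun_prop)]
    _ ≤ ∫ y, (ℓ y - ℓ m) ^ 2 ∂ν :=
        integral_mono_measure hν (ae_of_all _ fun y => sq_nonneg _)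
          (hℓ.sub (memLp_const _)).integrable_sq
    _ = Var[ℓ; ν] := by rw [variance_eq_integral hℓ.aemeasurable, hℓm]

end Homothety

theorem ApproxLogConcave.bddAbove_range {E : Type*} [NormedAddCommGroup E] [NormedSpace ℝ E]
    [MeasurableSpace E] [BorelSpace E] [FiniteDimensional ℝ E] {μ : Measure E}
    [μ.IsAddHaarMeasure] {ε : ℝ} {p : E → ℝ} (hp : ApproxLogConcave ε p) (hε : 0 < ε)
    (hint : ∫ y, p y ∂μ ≠ 0) : BddAbove (Set.range p) := by
  have hp0 := hp.nonneg hε.le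
  have hpi : Integrable p μ := .of_integral_ne_zero hint
  -- Integrating `ε ^ 2 * √(p x) * √(p y) ≤ p ((x + y) / 2)` over `y` bounds `√(p x)`.
  set S := ∫⁻ y, ENNReal.ofReal √(p y) ∂μ with hS
  have hS0 : S ≠ 0 := fun h => hint <| integral_eq_zero_of_ae <| by
    filter_upwards [(lintegral_eq_zero_iff' hpi.aemeasurable.sqrt.ennreal_ofReal).1 h] with y hy
    exact (sqrt_eq_zero (hp0 y)).1 ((sqrt_nonneg _).antisymm' (ENNReal.ofReal_eq_zero.1 hy))
  set c := ENNReal.ofReal |(1 / 2 : ℝ) ^ Module.finrank ℝ E|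
  set I := ∫⁻ y, ENNReal.ofReal (p y) ∂μ
  have hI : I ≠ ⊤ := hpi.lintegral_lt_top.ne
  have hc : c ≠ 0 := by simp [c]
  have hmid : ∀ x y, ε ^ 2 * √(p x) * √(p y) ≤ p (AffineMap.homothety x (1 / 2 : ℝ) y) :=
    fun x y => by
      have h := hp.sq_mul_rpow_mul_rpow_le_homothety hε (r := 1 / 2) (by norm_num) x y
      rwa [sub_half, ← sqrt_eq_rpow, ← sqrt_eq_rpow, ← mul_assoc] at h
  have hbound : ∀ x, ENNReal.ofReal (ε ^ 2 * √(p x)) ≤ I / c / S := fun x => by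
    rw [ENNReal.le_div_iff_mul_le (.inl hS0) (.inr (ENNReal.div_ne_top hI hc)),
      ENNReal.le_div_iff_mul_le (.inl hc) (.inr hI), mul_comm _ c]
    calc c * (ENNReal.ofReal (ε ^ 2 * √(p x)) * S)
        = c * ∫⁻ y, ENNReal.ofReal (ε ^ 2 * √(p x) * √(p y)) ∂μ := by
          simp_rw [hS, ENNReal.ofReal_mul (by positivity : 0 ≤ ε ^ 2 * √(p x))]
          rw [lintegral_const_mul' _ _ ENNReal.ofReal_ne_top]
      _ ≤ c * ∫⁻ y, ENNReal.ofReal (p (AffineMap.homothety x (1 / 2 : ℝ) y)) ∂μ := by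
          gcongr with y
          exact hmid x y
      _ = I := lintegral_comp_homothety μ (fun y => ENNReal.ofReal (p y)) x (by norm_num)
  refine ⟨((I / c / S).toReal / ε ^ 2) ^ 2, ?_⟩
  rintro _ ⟨x, rfl⟩
  rw [← sqrt_le_left (by positivity), le_div_iff₀' (by positivity)]
  exact ENNReal.ofReal_le_iff_le_toReal (ENNReal.div_ne_top (ENNReal.div_ne_top hI hc) hS0) |>.1
    (hbound x)

section DensMeasure

variable {n : ℕ} {p : EuclideanSpace ℝ (Fin n) → ℝ}

/-- The measure on `ℝⁿ` with density `p`, whose mean and covariance are `densMean n p` and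
`densCov n p`. Negative values of `p` are replaced by `0`. -/
def densMeasure (p : EuclideanSpace ℝ (Fin n) → ℝ) : Measure (EuclideanSpace ℝ (Fin n)) :=
  volume.withDensity fun x => ENNReal.ofReal (p x)

theorem isProbabilityMeasure_densMeasure (hp0 : ∀ x, 0 ≤ p x) (hp1 : ∫ x, p x = 1) :
    IsProbabilityMeasure (densMeasure p) := by
  refine ⟨?_⟩
  rw [densMeasure, withDensity_apply _ .univ, setLIntegral_univ,
    ← ofReal_integral_eq_lintegral_ofReal (integrable_of_integral_eq_one hp1) (ae_of_all _ hp0),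
    hp1, ENNReal.ofReal_one]

theorem integral_densMeasure {F : Type*} [NormedAddCommGroup F] [NormedSpace ℝ F]
    (hp0 : ∀ x, 0 ≤ p x) (hp : AEMeasurable p) (f : EuclideanSpace ℝ (Fin n) → F) :
    ∫ x, f x ∂densMeasure p = ∫ x, p x • f x := by
  rw [densMeasure, integral_withDensity_eq_integral_toReal_smul₀ hp.ennreal_ofReal
    (ae_of_all _ fun _ => ENNReal.ofReal_lt_top)]
  simp only [ENNReal.toReal_ofReal (hp0 _)]

theorem densMean_eq_integral (hp0 : ∀ x, 0 ≤ p x) (hp : AEMeasurable p) :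
    densMean n p = ∫ x, x ∂densMeasure p :=
  (integral_densMeasure hp0 hp _).symm

theorem densCov_apply_eq_integral (hp0 : ∀ x, 0 ≤ p x) (hp : AEMeasurable p) (i j : Fin n) :
    densCov n p i j =
      ∫ x, (x i - densMean n p i) * (x j - densMean n p j) ∂densMeasure p :=
  (integral_densMeasure hp0 hp _).symm

theorem memLp_id_densMeasure_of_posDef (hp0 : ∀ x, 0 ≤ p x) (hp : AEMeasurable p)
    [IsFiniteMeasure (densMeasure p)] (hcov : (densCov n p).PosDef) :
    MemLp id 2 (densMeasure p) := by
  refine .of_eval_piLp fun i => ?_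
  -- The Bochner integral of a non-integrable function is `0`, so a positive variance is finite.
  have hvar : ∫ x, (x i - densMean n p i) ^ 2 ∂densMeasure p ≠ 0 := by
    simpa only [densCov_apply_eq_integral hp0 hp, ← sq] using (hcov.diag_pos (i := i)).ne'
  have hcentred : MemLp (fun x => x i - densMean n p i) 2 (densMeasure p) :=
    (memLp_two_iff_integrable_sq (by fun_prop)).2 (.of_integral_ne_zero hvar)
  exact (hcentred.add (memLp_const (densMean n p i))).congr_norm (by fun_prop) (by simp)

theorem densCov_apply_eq_covariance (hp0 : ∀ x, 0 ≤ p x) (hp : AEMeasurable p)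
    (hmem : MemLp id 2 (densMeasure p)) [IsFiniteMeasure (densMeasure p)] (i j : Fin n) :
    densCov n p i j = cov[fun x => x i, fun x => x j; densMeasure p] := by
  have hint : ∀ k, Integrable (fun x : EuclideanSpace ℝ (Fin n) => x k) (densMeasure p) :=
    fun k => (hmem.eval_piLp k).integrable one_le_two
  rw [densCov_apply_eq_integral hp0 hp, covariance, densMean_eq_integral hp0 hp,
    eval_integral_piLp hint, eval_integral_piLp hint]

theorem mahal_densCov (hp0 : ∀ x, 0 ≤ p x) (hp : AEMeasurable p)
    (hmem : MemLp id 2 (densMeasure p)) [IsFiniteMeasure (densMeasure p)]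
    (θ : EuclideanSpace ℝ (Fin n)) :
    mahal n (densCov n p) θ = √(Var[innerSL ℝ θ; densMeasure p]) := by
  have hcoord : ∀ i, MemLp (fun x : EuclideanSpace ℝ (Fin n) => θ i * x i) 2 (densMeasure p) :=
    fun i => (hmem.eval_piLp i).const_mul (θ i)
  have hsum : innerSL ℝ θ = ∑ i, fun x : EuclideanSpace ℝ (Fin n) => θ i * x i := by
    ext x
    simp [PiLp.inner_apply, mul_comm]
  rw [hsum, variance_sum hcoord, mahal]
  simp only [covariance_const_mul_left, covariance_const_mul_right,
    densCov_apply_eq_covariance hp0 hp hmem]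
  refine congrArg _ (Finset.sum_congr rfl fun i _ => Finset.sum_congr rfl fun j _ => ?_)
  ring

end DensMeasure

section Mahal

open scoped Matrix

variable {n : ℕ} {A : Matrix (Fin n) (Fin n) ℝ}

theorem mahal_eq_sqrt_dotProduct (w : EuclideanSpace ℝ (Fin n)) :
    mahal n A w = √(w.ofLp ⬝ᵥ A *ᵥ w.ofLp) := by
  simp only [mahal, dotProduct, Matrix.mulVec, Finset.mul_sum, mul_assoc]

theorem mahal_inv_le_of_inner_le (hA : IsUnit A) {w : EuclideanSpace ℝ (Fin n)} {C : ℝ}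
    (hC : 0 ≤ C) (hw : ∀ θ : EuclideanSpace ℝ (Fin n), inner ℝ θ w ≤ C * mahal n A θ) :
    mahal n A⁻¹ w ≤ C := by
  set q := w.ofLp ⬝ᵥ A⁻¹ *ᵥ w.ofLp
  set θ : EuclideanSpace ℝ (Fin n) := WithLp.toLp 2 (A⁻¹ *ᵥ w.ofLp) with hθ
  have hAθ : A *ᵥ θ.ofLp = w.ofLp := by
    rw [hθ, Matrix.mulVec_mulVec,
      Matrix.mul_nonsing_inv _ ((Matrix.isUnit_iff_isUnit_det A).1 hA), Matrix.one_mulVec]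
  have hinner : inner ℝ θ w = q := by
    rw [EuclideanSpace.inner_eq_star_dotProduct, star_trivial]
  have hnorm : mahal n A θ = √q := by
    rw [mahal_eq_sqrt_dotProduct, hAθ, dotProduct_comm]
  have hqC : q ≤ C * √q := by
    simpa only [hinner, hnorm] using hw θ
  rw [mahal_eq_sqrt_dotProduct]
  by_contra! hlt
  have hq0 : 0 < q := sqrt_pos.1 (hC.trans_lt hlt)
  have hlt_mul : C * √q < √q * √q := mul_lt_mul_of_pos_right hlt (sqrt_pos.2 hq0)
  exact hqC.not_gt (hlt_mul.trans_eq (mul_self_sqrt hq0.le))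

end Mahal

theorem one_sub_mul_le_rpow_mul_one_sub_pow {u s : ℝ} (hu : 0 < u) (hu1 : u ≤ 1) (hs0 : 0 ≤ s)
    (hs1 : s ≤ 1) (n : ℕ) : 1 - s * (log u⁻¹ + n) ≤ u ^ s * (1 - s) ^ n := by
  have hrpow : 1 + s * log u ≤ u ^ s := by
    rw [rpow_def_of_pos hu, add_comm, mul_comm]
    exact add_one_le_exp _
  have hpow : 1 - n * s ≤ (1 - s) ^ n := by
    simpa [sub_eq_add_neg] using one_add_mul_le_pow (a := -s) (by linarith) n
  have hpow1 : (1 - s) ^ n ≤ 1 := pow_le_one₀ (by linarith) (by linarith)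
  have hrpow1 : u ^ s ≤ 1 := rpow_le_one hu.le hu1 hs0
  rw [log_inv]
  nlinarith [mul_nonneg (sub_nonneg.2 hrpow1) (sub_nonneg.2 hpow1)]

section Density

variable {n : ℕ} {ε M : ℝ} {p : EuclideanSpace ℝ (Fin n) → ℝ}

theorem mul_sq_inner_sub_densMean_le (hp : ApproxLogConcave ε p) (hε : 0 < ε)
    (hp1 : ∫ y, p y = 1) (hcov : (densCov n p).PosDef) (hM0 : 0 < M) (hM : ∀ y, p y ≤ M)
    {r : ℝ} (hr : r ∈ Set.Ioc (0 : ℝ) 1) (x θ : EuclideanSpace ℝ (Fin n)) :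
    ε ^ 2 * (p x / M) ^ (1 - r) * r ^ n * ((1 - r) * inner ℝ θ (x - densMean n p)) ^ 2 ≤
      mahal n (densCov n p) θ ^ 2 := by
  have hp0 := hp.nonneg hε.le
  have hpm : AEMeasurable p := (integrable_of_integral_eq_one hp1).aemeasurable
  have := isProbabilityMeasure_densMeasure hp0 hp1
  have hmem := memLp_id_densMeasure_of_posDef hp0 hpm hcov
  have hκ : 0 ≤ ε ^ 2 * (p x / M) ^ (1 - r) :=
    mul_nonneg (sq_nonneg ε) (rpow_nonneg (div_nonneg (hp0 x) hM0.le) _)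
  have hpush : ENNReal.ofReal (ε ^ 2 * (p x / M) ^ (1 - r) * r ^ n) •
      (densMeasure p).map (AffineMap.homothety x r) ≤ densMeasure p := by
    simpa only [densMeasure, finrank_euclideanSpace_fin] using
      smul_map_homothety_withDensity_le volume hκ hr.1
        (hp.mul_le_homothety_of_le hε hM0 hM (Set.Ioc_subset_Icc_self hr) x)
  rw [mahal_densCov hp0 hpm hmem, sq_sqrt (variance_nonneg _ _), densMean_eq_integral hp0 hpm,
    ← innerSL_apply_apply ℝ]
  exact mul_sq_apply_sub_integral_le_variance (mul_nonneg hκ (pow_nonneg hr.1.le n)) hpush hmem _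

theorem mahal_sub_densMean_le (hp : ApproxLogConcave ε p) (hε : 0 < ε) (hp1 : ∫ y, p y = 1)
    (hcov : (densCov n p).PosDef) (hM : ∀ y, p y ≤ M) {x : EuclideanSpace ℝ (Fin n)}
    (hx : 0 < p x) :
    mahal n (densCov n p)⁻¹ (x - densMean n p) ≤ 3 / ε * (log (M / p x) + n) := by
  have hM0 : 0 < M := hx.trans_le (hM x)
  have hlog : 0 ≤ log (M / p x) := log_nonneg ((one_le_div hx).2 (hM x))
  obtain rfl | hn := n.eq_zero_or_pos
  · simpa [mahal] using mul_nonneg (by positivity) hlog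
  set L := log (M / p x) + n with hL
  have hL1 : 1 ≤ L := le_add_of_nonneg_of_le hlog (Nat.one_le_cast.2 hn)
  -- The contraction ratio `1 - s` is chosen so that at least half of `ε ^ 2` survives in `hkey`.
  set s := 1 / (2 * L) with hs
  have hs0 : 0 < s := by positivity
  have hs1 : s < 1 := (div_lt_one (by positivity)).2 (by linarith)
  have hsL : 1 - s * L = 1 / 2 := by
    rw [hs]
    field_simp
    norm_num
  have hhalf : 1 / 2 ≤ (p x / M) ^ s * (1 - s) ^ n := by
    rw [← hsL, hL, ← inv_div (p x)]
    exact one_sub_mul_le_rpow_mul_one_sub_pow (div_pos hx hM0) ((div_le_one hM0).2 (hM x))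
      hs0.le hs1.le n
  refine mahal_inv_le_of_inner_le hcov.isUnit (by positivity) fun θ => ?_
  set t := inner ℝ θ (x - densMean n p)
  have hkey := mul_sq_inner_sub_densMean_le hp hε hp1 hcov hM0 hM
    ⟨sub_pos.2 hs1, sub_le_self 1 hs0.le⟩ x θ
  rw [sub_sub_cancel] at hkey
  refine le_of_abs_le (abs_le_of_sq_le_sq ?_ (mul_nonneg (by positivity) (sqrt_nonneg _)))
  calc t ^ 2 = 8 * (L / ε) ^ 2 * (ε ^ 2 * (1 / 2) * (s * t) ^ 2) := by
        rw [hs]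
        field_simp
        norm_num
    _ ≤ 8 * (L / ε) ^ 2 * (ε ^ 2 * ((p x / M) ^ s * (1 - s) ^ n) * (s * t) ^ 2) := by gcongr
    _ ≤ 8 * (L / ε) ^ 2 * mahal n (densCov n p) θ ^ 2 := by
        rw [← mul_assoc (ε ^ 2)]
        gcongr
    _ ≤ 9 * (L / ε) ^ 2 * mahal n (densCov n p) θ ^ 2 := by
        gcongr
        norm_num
    _ = (3 / ε * L * mahal n (densCov n p) θ) ^ 2 := by ring

end Density

theorem mahalanobis_bounded_by_potential_general (n : ℕ) (ε : ℝ) (hε : 0 < ε)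
    (V : EuclideanSpace ℝ (Fin n) → ℝ) (Z : ℝ) (hZ : 0 < Z)
    (hf1 : ∫ x, Z⁻¹ * exp (-V x) = 1)
    (hflc : ApproxLogConcave ε fun x => Z⁻¹ * exp (-V x))
    (hcov : (densCov n fun x => Z⁻¹ * exp (-V x)).PosDef) (x : EuclideanSpace ℝ (Fin n)) :
    mahal n (densCov n fun y => Z⁻¹ * exp (-V y))⁻¹
        (x - densMean n fun y => Z⁻¹ * exp (-V y)) ≤
      3 / ε * (V x - (⨅ y, V y) + n) := by
  have hV : BddBelow (Set.range V) := by
    obtain ⟨B, hB⟩ := hflc.bddAbove_range (μ := volume) hε (hf1 ▸ one_ne_zero)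
    refine ⟨-log (Z * B), ?_⟩
    rintro _ ⟨y, rfl⟩
    have hy : exp (-V y) ≤ Z * B := (inv_mul_le_iff₀ hZ).1 (hB ⟨y, rfl⟩)
    exact neg_le.1 ((le_log_iff_exp_le ((exp_pos _).trans_le hy)).2 hy)
  have hmax : ∀ y, Z⁻¹ * exp (-V y) ≤ Z⁻¹ * exp (-⨅ y, V y) := fun y => by
    gcongr
    exact ciInf_le hV y
  convert mahal_sub_densMean_le hflc hε hf1 hcov hmax (x := x) (by positivity) using 3
  rw [mul_div_mul_left _ _ (inv_ne_zero hZ.ne'), ← exp_sub, log_exp]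
  ring

theorem three_div_mul_add_le_exp_div_sq_mul {n : ℕ} {ε v : ℝ} (hε0 : 0 < ε) (hε1 : ε ≤ 1)
    (hv : 0 ≤ v) :
    3 / ε * (v + n) ≤ exp 15 / ε ^ 2 * (v + 1 / ε ^ 2 + 7 * n * (1 + log (n / ε))) := by
  have hlog : 0 ≤ log (n / ε) := by
    obtain rfl | hn := n.eq_zero_or_pos
    · simp
    · exact log_nonneg ((one_le_div hε0).2 (hε1.trans (Nat.one_le_cast.2 hn)))
  have hexp : 3 ≤ exp 15 := by linarith [add_one_le_exp (15 : ℝ)]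
  gcongr
  · exact pow_le_of_le_one hε0.le hε1 two_ne_zero
  · exact le_add_of_nonneg_right (by positivity)
  · nlinarith [mul_nonneg (Nat.cast_nonneg (α := ℝ) n) hlog, Nat.cast_nonneg (α := ℝ) n]

/-- **Lemma 7.6.** For an `ε`-approximately log-concave density `f = Z⁻¹ exp(-V)` with
`V* = min V = 0`, the Mahalanobis distance of `x` from the mean is bounded by the
potential value: `‖x - μ(f)‖_{Cov(f)⁻¹} ≤ (e¹⁵/ε²)(V(x) - V* + 1/ε² + 7n(1 + log(n/ε)))`. -/
theorem mahalanobis_bounded_by_potential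
    (n : ℕ) (ε : ℝ) (hε : ε ∈ Set.Ioo (0 : ℝ) (1 / 2))
    (V : EuclideanSpace ℝ (Fin n) → ℝ) (Z : ℝ) (hZ : 0 < Z)
    (hV0 : ∀ x, 0 ≤ V x) (hVmin : ⨅ x, V x = 0)
    (hf1 : ∫ x, Z⁻¹ * Real.exp (-V x) = 1)
    (hflc : ApproxLogConcave ε fun x => Z⁻¹ * Real.exp (-V x))
    (hcov : (densCov n fun x => Z⁻¹ * Real.exp (-V x)).PosDef) :
    ∀ x : EuclideanSpace ℝ (Fin n),
      mahal n (densCov n fun y => Z⁻¹ * Real.exp (-V y))⁻¹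
          (x - densMean n fun y => Z⁻¹ * Real.exp (-V y))
        ≤ Real.exp 15 / ε ^ 2
            * (V x - (⨅ y, V y) + 1 / ε ^ 2 + 7 * n * (1 + Real.log (n / ε))) := by
  intro x
  have hx : 0 ≤ V x - ⨅ y, V y := by simpa only [hVmin, sub_zero] using hV0 x
  exact (mahalanobis_bounded_by_potential_general n ε hε.1 V Z hZ hf1 hflc hcov x).trans
    (three_div_mul_add_le_exp_div_sq_mul hε.1 (by linarith [hε.2]) hx)
end
end

section
/- Let 0 < ε < 1/2 and let f be an isotropic ε-approximately log-concave probability density on ℝ. Then for every s ≤ ε/80, one has ∫_{s}^{∞} (x − s)·f(x) dx > ε/80. -/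
open MeasureTheory Real

noncomputable section

/-!
Reverse Hölder: if `f` has mass `1` and `∫ |x| f ≤ ε L / 20`, then `∫ x² f < L²`. A log-concave `g`
comparable to `f` is at least `5 / (2L)` at some point of `[-L/10, L/10]` and at most `1 / (20L)` at
some point of `[L, 2L]`, so it starts above the exponential `2 / (5L) * exp (-x / L)` and then falls
below it. Since `log g` is concave, `g` stays below that exponential from then on, and symmetrically
on the left. Now split `∫ x² f` at `|x| = 10 L / ε`: the inner part is at most
`10 L / ε * ∫ |x| f`, and in the outer part the loss `1 / ε` between `f` and `g` is absorbed by
`|x| / (10 L)`, which the exponential tail dominates.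

For variance `σ²` this gives `∫ |x| f > ε σ / 20`. When `f` has mean `0`, the positive part of `x`
carries half of this first absolute moment, and truncating at `s` costs at most `max s 0`.
-/

lemma IsLogConcave.comp_neg {E : Type*} [AddCommGroup E] [Module ℝ E] {g : E → ℝ}
    (hg : IsLogConcave g) : IsLogConcave fun x => g (-x) := by
  refine ⟨fun x => hg.1 (-x), fun x y a b ha hb hab => ?_⟩
  simpa only [smul_neg, neg_add] using hg.2 (-x) (-y) a b ha hb hab

lemma ApproxLogConcave.comp_neg {E : Type*} [AddCommGroup E] [Module ℝ E] {ε : ℝ} {p : E → ℝ}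
    (hp : ApproxLogConcave ε p) : ApproxLogConcave ε fun x => p (-x) := by
  obtain ⟨g, hg, hgp⟩ := hp
  exact ⟨fun x => g (-x), hg.comp_neg, fun x => hgp (-x)⟩

lemma ApproxLogConcave.nonneg_s16 {E : Type*} [AddCommMonoid E] [SMul ℝ E] {ε : ℝ} {p : E → ℝ}
    (hp : ApproxLogConcave ε p) (hε : 0 ≤ ε) (x : E) : 0 ≤ p x := by
  obtain ⟨g, hg, hgp⟩ := hp
  exact (mul_nonneg hε (hg.1 x)).trans (hgp x).1

lemma ApproxLogConcave.le_one {E : Type*} [AddCommMonoid E] [SMul ℝ E] {ε : ℝ} {p : E → ℝ}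
    (hp : ApproxLogConcave ε p) {x : E} (hx : p x ≠ 0) : ε ≤ 1 := by
  by_contra! hε
  have hε0 : 0 < ε := one_pos.trans hε
  have hpx : 0 < p x := (hp.nonneg_s16 hε0.le x).lt_of_ne' hx
  obtain ⟨g, _, hgp⟩ := hp
  obtain ⟨hlow, hup⟩ := hgp x
  have hgx : 0 < g x := pos_of_mul_pos_right (hpx.trans_le hup) (by positivity)
  have : ε ≤ 1 / ε := le_of_mul_le_mul_right (hlow.trans hup) hgx
  rw [le_div_iff₀ hε0] at this
  nlinarith

lemma ApproxLogConcave.le_one_of_integral_ne_zero {E : Type*} [AddCommMonoid E] [SMul ℝ E]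
    [MeasurableSpace E] {μ : Measure E} {ε : ℝ} {p : E → ℝ} (hp : ApproxLogConcave ε p)
    (hint : ∫ x, p x ∂μ ≠ 0) : ε ≤ 1 := by
  obtain ⟨x, hx⟩ : ∃ x, p x ≠ 0 := by
    by_contra! h
    simp [h] at hint
  exact hp.le_one hx

/-- Concavity of `log g`, written multiplicatively because `g` may vanish. -/
lemma IsLogConcave.le_mul_exp_of_le {g : ℝ → ℝ} (hg : IsLogConcave g) {A k x₀ y x : ℝ}
    (hA : 0 < A) (hxy : x₀ < y) (hyx : y ≤ x) (h₀ : A * exp (k * x₀) ≤ g x₀)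
    (hy : g y ≤ A * exp (k * y)) : g x ≤ A * exp (k * x) := by
  by_contra! hx
  have hd : 0 < x - x₀ := by linarith
  obtain ⟨b, hb⟩ : ∃ b, b = (y - x₀) / (x - x₀) := ⟨_, rfl⟩
  have hb0 : 0 < b := hb ▸ div_pos (by linarith) hd
  have hb1 : b ≤ 1 := hb ▸ (div_le_one hd).2 (by linarith)
  have hcomb : (1 - b) * x₀ + b * x = y := by
    have : b * (x - x₀) = y - x₀ := hb ▸ div_mul_cancel₀ _ hd.ne'
    linarith
  have hconc : g x₀ ^ (1 - b) * g x ^ b ≤ g y := by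
    simpa only [smul_eq_mul, hcomb] using hg.2 x₀ x (1 - b) b (by linarith) hb0.le (by ring)
  have hinterp :
      (A * exp (k * x₀)) ^ (1 - b) * (A * exp (k * x)) ^ b = A * exp (k * y) := by
    rw [← exp_log hA]
    simp only [← exp_add, ← exp_mul]
    rw [← hcomb]
    ring_nf
  have hlt : A * exp (k * y) < g x₀ ^ (1 - b) * g x ^ b := by
    rw [← hinterp]
    have h₀' : 0 < A * exp (k * x₀) := by positivity
    exact mul_lt_mul' (rpow_le_rpow h₀'.le h₀ (by linarith))
      (rpow_lt_rpow (by positivity) hx hb0) (by positivity)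
      (rpow_pos_of_pos (h₀'.trans_le h₀) _)
  linarith

lemma integrable_abs_mul_of_integrable_sq_mul {μ : Measure ℝ} {f : ℝ → ℝ} (hf : Integrable f μ)
    (hf2 : Integrable (fun x => x ^ 2 * f x) μ) : Integrable (fun x => |x| * f x) μ := by
  refine (hf.norm.add hf2.norm).mono'
    (continuous_abs.aestronglyMeasurable.mul hf.aestronglyMeasurable) (.of_forall fun x => ?_)
  have hx : |x| ≤ 1 + x ^ 2 := by nlinarith [sq_nonneg (|x| - 1), sq_abs x]
  calc ‖|x| * f x‖ = |x| * ‖f x‖ := by rw [norm_mul, norm_eq_abs, abs_abs]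
    _ ≤ (1 + x ^ 2) * ‖f x‖ := by gcongr
    _ = ‖f x‖ + ‖x ^ 2 * f x‖ := by rw [norm_mul, norm_of_nonneg (sq_nonneg x)]; ring

lemma integral_sub_div_le_setIntegral_Icc {μ : Measure ℝ} {f : ℝ → ℝ} (hf0 : ∀ x, 0 ≤ f x)
    (hf : Integrable f μ) (hint : Integrable (fun x => |x| * f x) μ) {r : ℝ}
    (hr : 0 < r) :
    (∫ x, f x ∂μ) - (∫ x, |x| * f x ∂μ) / r ≤ ∫ x in Set.Icc (-r) r, f x ∂μ := by
  rw [← integral_div, ← integral_sub hf (hint.div_const r), ← integral_indicator measurableSet_Icc]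
  refine integral_mono (hf.sub (hint.div_const r)) (hf.indicator measurableSet_Icc) fun x => ?_
  by_cases hx : x ∈ Set.Icc (-r) r
  · simpa only [Set.indicator_of_mem hx] using
      sub_le_self _ (div_nonneg (mul_nonneg (abs_nonneg x) (hf0 x)) hr.le)
  · have hrx : r ≤ |x| := (not_le.1 fun h => hx (abs_le.1 h)).le
    simp only [Set.indicator_of_notMem hx, sub_nonpos, le_div_iff₀ hr]
    rw [mul_comm]
    exact mul_le_mul_of_nonneg_right hrx (hf0 x)

lemma exists_abs_le_and_le_apply {f : ℝ → ℝ} (hf0 : ∀ x, 0 ≤ f x) (hf : Integrable f)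
    (hint : Integrable fun x => |x| * f x) {r : ℝ} (hr : 0 < r) :
    ∃ x, |x| ≤ r ∧ ((∫ x, f x) - (∫ x, |x| * f x) / r) / (2 * r) ≤ f x := by
  obtain ⟨x, hx, hfx⟩ := exists_setAverage_le (μ := volume) (s := Set.Icc (-r) r)
    (by simp [hr]) (by simp) hf.integrableOn
  refine ⟨x, abs_le.2 hx, le_trans ?_ hfx⟩
  rw [setAverage_eq, volume_real_Icc_of_le (by linarith), smul_eq_mul, ← div_eq_inv_mul,
    show r - -r = 2 * r by ring]
  gcongr
  exact integral_sub_div_le_setIntegral_Icc hf0 hf hint hr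

lemma exists_mem_Icc_apply_le {f : ℝ → ℝ} (hf0 : ∀ x, 0 ≤ f x)
    (hint : Integrable fun x => |x| * f x) {L : ℝ} (hL : 0 < L) :
    ∃ y ∈ Set.Icc L (2 * L), f y ≤ (∫ x, |x| * f x) / L ^ 2 := by
  obtain ⟨y, hy, hfy⟩ := exists_le_setAverage (μ := volume) (s := Set.Icc L (2 * L))
    (by simp [two_mul, hL]) (by simp) hint.integrableOn
  refine ⟨y, hy, ?_⟩
  rw [setAverage_eq, volume_real_Icc_of_le (by linarith), smul_eq_mul, ← div_eq_inv_mul,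
    show 2 * L - L = L by ring, le_div_iff₀ hL] at hfy
  rw [le_div_iff₀ (by positivity)]
  calc f y * L ^ 2 = L * f y * L := by ring
    _ ≤ |y| * f y * L := by
      gcongr
      · exact hf0 y
      · exact hy.1.trans (le_abs_self y)
    _ ≤ ∫ x in Set.Icc L (2 * L), |x| * f x := hfy
    _ ≤ ∫ x, |x| * f x :=
      setIntegral_le_integral hint (.of_forall fun x => mul_nonneg (abs_nonneg x) (hf0 x))

lemma integral_abs_pow_mul_exp_neg_div (n : ℕ) {L : ℝ} (hL : 0 < L) :
    ∫ x : ℝ, |x| ^ n * exp (-(|x| / L)) = 2 * (n.factorial * L ^ (n + 1)) := by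
  rw [integral_comp_abs (f := fun x => x ^ n * exp (-(x / L)))]
  have hΓ := integral_rpow_mul_exp_neg_mul_Ioi (a := n + 1) (by positivity) (inv_pos.2 hL)
  rw [Gamma_nat_eq_factorial, one_div, inv_inv, ← Nat.cast_add_one, rpow_natCast] at hΓ
  simp only [Nat.cast_add_one, add_sub_cancel_right, rpow_natCast] at hΓ
  simp only [div_eq_inv_mul, hΓ]
  ring

lemma integrable_abs_pow_mul_exp_neg_div (n : ℕ) {L : ℝ} (hL : 0 < L) :
    Integrable fun x : ℝ => |x| ^ n * exp (-(|x| / L)) :=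
  .of_integral_ne_zero (by rw [integral_abs_pow_mul_exp_neg_div n hL]; positivity)

lemma one_eighth_lt_exp_neg_two : 1 / 8 < exp (-2) := by
  rw [exp_neg, ← one_div]
  refine one_div_lt_one_div_of_lt (exp_pos _) ?_
  calc exp 2 = exp 1 ^ 2 := by rw [← exp_nat_mul]; norm_num
    _ < 2.8 ^ 2 := by gcongr; exact exp_one_lt_d9.trans (by norm_num)
    _ < 8 := by norm_num

lemma IsLogConcave.le_mul_exp_neg_div {g : ℝ → ℝ} (hg : IsLogConcave g) {A L x₀ y x : ℝ}
    (hA : 0 < A) (hlower : -L ≤ x₀) (hupper : x₀ < L) (hy : y ∈ Set.Icc L (2 * L))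
    (hx : 2 * L ≤ x) (hgx₀ : 3 * A ≤ g x₀) (hgy : g y ≤ A / 8) :
    g x ≤ A * exp (-(x / L)) := by
  have hL : 0 < L := by linarith
  have hstart : A * exp (-L⁻¹ * x₀) ≤ g x₀ := by
    have hexponent : -L⁻¹ * x₀ ≤ 1 := by
      rw [neg_mul, ← div_eq_inv_mul, neg_le, le_div_iff₀ hL]
      linarith
    calc A * exp (-L⁻¹ * x₀) ≤ A * 3 := by
          gcongr
          exact (exp_le_exp.2 hexponent).trans exp_one_lt_three.le
      _ ≤ g x₀ := by linarith
  have hcross : g y ≤ A * exp (-L⁻¹ * y) := by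
    have hexponent : -2 ≤ -L⁻¹ * y := by
      rw [neg_mul, neg_le_neg_iff, ← div_eq_inv_mul, div_le_iff₀ hL]
      exact hy.2
    calc g y ≤ A * (1 / 8) := hgy.trans_eq (by ring)
      _ ≤ A * exp (-L⁻¹ * y) := by
        gcongr
        exact one_eighth_lt_exp_neg_two.le.trans (exp_le_exp.2 hexponent)
  simpa only [neg_mul, ← div_eq_inv_mul] using
    hg.le_mul_exp_of_le hA (hupper.trans_le hy.1) (hy.2.trans hx) hstart hcross

section FirstMomentSmall

variable {ε L : ℝ} {f : ℝ → ℝ}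

lemma ApproxLogConcave.le_mul_exp_of_two_mul_le (hf : ApproxLogConcave ε f) (hε : 0 < ε)
    (hf1 : ∫ x, f x = 1) (hint : Integrable fun x => |x| * f x) (hL : 0 < L)
    (hm : ∫ x, |x| * f x ≤ ε * L / 20) {x : ℝ} (hx : 2 * L ≤ x) :
    f x ≤ 1 / ε * (2 / (5 * L) * exp (-(x / L))) := by
  have hf0 := hf.nonneg_s16 hε.le
  have hε1 := hf.le_one_of_integral_ne_zero (μ := volume) (by simp [hf1])
  obtain ⟨g, hg, hgf⟩ := hf
  obtain ⟨x₀, hx₀, hfx₀⟩ := exists_abs_le_and_le_apply hf0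
    (.of_integral_ne_zero (by simp [hf1])) hint (r := ε * L / 10) (by positivity)
  obtain ⟨y, hy, hfy⟩ := exists_mem_Icc_apply_le hf0 hint hL
  have hx₀L : |x₀| ≤ L / 10 := hx₀.trans (by nlinarith)
  have hgx₀ : 5 / (2 * L) ≤ g x₀ := by
    have hratio : (∫ x, |x| * f x) / (ε * L / 10) ≤ 1 / 2 := by
      rw [div_le_iff₀ (by positivity)]
      linarith
    calc 5 / (2 * L) = ε * ((1 - 1 / 2) / (2 * (ε * L / 10))) := by field_simp; norm_num
      _ ≤ ε * f x₀ := by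
        refine mul_le_mul_of_nonneg_left (le_trans ?_ hfx₀) hε.le
        rw [hf1]
        gcongr
      _ ≤ g x₀ := by
        have hup := (hgf x₀).2
        rwa [one_div, ← div_eq_inv_mul, le_div_iff₀ hε, mul_comm] at hup
  have hgy : g y ≤ 1 / (20 * L) := by
    refine le_of_mul_le_mul_left ?_ hε
    calc ε * g y ≤ f y := (hgf y).1
      _ ≤ ε * L / 20 / L ^ 2 := hfy.trans (by gcongr)
      _ = ε * (1 / (20 * L)) := by field_simp
  have hx₀' := abs_le.1 hx₀L
  have hgx : g x ≤ 2 / (5 * L) * exp (-(x / L)) := by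
    refine hg.le_mul_exp_neg_div (by positivity) (by linarith) (by linarith) hy hx
      (le_trans ?_ hgx₀) (hgy.trans_eq (by field_simp; norm_num))
    rw [mul_div_assoc', div_le_div_iff₀ (by positivity) (by positivity)]
    linarith
  exact (hgf x).2.trans (by gcongr)

lemma ApproxLogConcave.le_mul_exp_of_two_mul_le_abs (hf : ApproxLogConcave ε f) (hε : 0 < ε)
    (hf1 : ∫ x, f x = 1) (hint : Integrable fun x => |x| * f x) (hL : 0 < L)
    (hm : ∫ x, |x| * f x ≤ ε * L / 20) {x : ℝ} (hx : 2 * L ≤ |x|) :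
    f x ≤ 1 / ε * (2 / (5 * L) * exp (-(|x| / L))) := by
  rcases abs_choice x with h | h <;> rw [h] at hx ⊢
  · exact hf.le_mul_exp_of_two_mul_le hε hf1 hint hL hm hx
  · have hf1' : ∫ x, f (-x) = 1 := by rw [integral_neg_eq_self f volume, hf1]
    have hint' : Integrable fun x => |x| * f (-x) := by
      simpa only [abs_neg] using hint.comp_neg
    have hm' : ∫ x, |x| * f (-x) ≤ ε * L / 20 := by
      rw [← integral_neg_eq_self] at hm
      simpa only [abs_neg] using hm
    simpa only [neg_neg] using hf.comp_neg.le_mul_exp_of_two_mul_le hε hf1' hint' hL hm' hx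

lemma ApproxLogConcave.sq_mul_le_add (hf : ApproxLogConcave ε f) (hε : 0 < ε)
    (hf1 : ∫ x, f x = 1) (hint : Integrable fun x => |x| * f x) (hL : 0 < L)
    (hm : ∫ x, |x| * f x ≤ ε * L / 20) (x : ℝ) :
    x ^ 2 * f x ≤
      10 * L / ε * (|x| * f x) + 1 / (25 * L ^ 2) * (|x| ^ 3 * exp (-(|x| / L))) := by
  have hfirst : 0 ≤ |x| * f x := mul_nonneg (abs_nonneg x) (hf.nonneg_s16 hε.le x)
  rcases le_total |x| (10 * L / ε) with hx | hx
  · calc x ^ 2 * f x = |x| * (|x| * f x) := by rw [← sq_abs]; ring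
      _ ≤ 10 * L / ε * (|x| * f x) := by gcongr
      _ ≤ _ := le_add_of_nonneg_right (by positivity)
  · have hεx : 1 / ε ≤ |x| / (10 * L) := by
      rw [le_div_iff₀ (by positivity)]
      exact (by ring : 1 / ε * (10 * L) = 10 * L / ε).trans_le hx
    have hε1 := hf.le_one_of_integral_ne_zero (μ := volume) (by simp [hf1])
    have hxL : 2 * L ≤ |x| := by
      refine le_trans ?_ hx
      rw [le_div_iff₀ hε]
      nlinarith
    calc x ^ 2 * f x ≤ x ^ 2 * (1 / ε * (2 / (5 * L) * exp (-(|x| / L)))) := by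
          gcongr
          exact hf.le_mul_exp_of_two_mul_le_abs hε hf1 hint hL hm hxL
      _ ≤ x ^ 2 * (|x| / (10 * L) * (2 / (5 * L) * exp (-(|x| / L)))) := by gcongr
      _ = 1 / (25 * L ^ 2) * (|x| ^ 3 * exp (-(|x| / L))) := by
          rw [← sq_abs]
          field_simp
          ring
      _ ≤ _ := le_add_of_nonneg_left (by positivity)

lemma ApproxLogConcave.integral_sq_mul_lt (hf : ApproxLogConcave ε f) (hε : 0 < ε)
    (hf1 : ∫ x, f x = 1) (hint : Integrable fun x => |x| * f x) (hL : 0 < L)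
    (hm : ∫ x, |x| * f x ≤ ε * L / 20) :
    ∫ x, x ^ 2 * f x < L ^ 2 := by
  have hexp := integrable_abs_pow_mul_exp_neg_div 3 hL
  calc ∫ x, x ^ 2 * f x
      ≤ ∫ x, (10 * L / ε * (|x| * f x) + 1 / (25 * L ^ 2) * (|x| ^ 3 * exp (-(|x| / L)))) :=
        integral_mono_of_nonneg
          (.of_forall fun x => mul_nonneg (sq_nonneg x) (hf.nonneg_s16 hε.le x))
          ((hint.const_mul _).add (hexp.const_mul _))
          (.of_forall (hf.sq_mul_le_add hε hf1 hint hL hm))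
    _ = 10 * L / ε * (∫ x, |x| * f x) + 1 / (25 * L ^ 2) * (2 * ((3).factorial * L ^ (3 + 1))) := by
        rw [integral_add (hint.const_mul _) (hexp.const_mul _), integral_const_mul,
          integral_const_mul, integral_abs_pow_mul_exp_neg_div 3 hL]
    _ ≤ 10 * L / ε * (ε * L / 20) + 1 / (25 * L ^ 2) * (2 * ((3).factorial * L ^ (3 + 1))) := by
        gcongr
    _ = 49 / 50 * L ^ 2 := by
        norm_num [Nat.factorial]
        field_simp
        norm_num
    _ < L ^ 2 := by nlinarith [pow_pos hL 2]

end FirstMomentSmall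

lemma half_add_sub_max_mul_le_setIntegral_Ioi {μ : Measure ℝ} {f : ℝ → ℝ} (hf0 : ∀ x, 0 ≤ f x)
    (hf : Integrable f μ) (hint : Integrable (fun x => |x| * f x) μ) (s : ℝ) :
    ((∫ x, |x| * f x ∂μ) + ∫ x, x * f x ∂μ) / 2 - max s 0 * ∫ x, f x ∂μ
      ≤ ∫ x in Set.Ioi s, (x - s) * f x ∂μ := by
  have hx1 : Integrable (fun x => x * f x) μ :=
    hint.mono (continuous_id.aestronglyMeasurable.mul hf.aestronglyMeasurable)
      (.of_forall fun x => by simp)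
  have hsub : Integrable (fun x => (x - s) * f x) μ := by
    simpa only [sub_mul, Pi.sub_def] using hx1.sub (hf.const_mul s)
  have hpos : Integrable (fun x => (|x| * f x + x * f x) / 2) μ := (hint.add hx1).div_const 2
  rw [← integral_add hint hx1, ← integral_div, ← integral_const_mul,
    ← integral_sub hpos (hf.const_mul _), ← integral_indicator measurableSet_Ioi]
  refine integral_mono (hpos.sub (hf.const_mul _)) (hsub.indicator measurableSet_Ioi) fun x => ?_
  calc (|x| * f x + x * f x) / 2 - max s 0 * f x = ((|x| + x) / 2 - max s 0) * f x := by ring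
    _ ≤ (Set.Ioi s).indicator (fun x => x - s) x * f x := by
      refine mul_le_mul_of_nonneg_right ?_ (hf0 x)
      have hs := le_max_left s 0
      have h0 := le_max_right s 0
      rw [Set.indicator_apply]
      split_ifs with hx <;> rw [Set.mem_Ioi] at hx <;>
        rcases abs_cases x with ⟨habs, -⟩ | ⟨habs, -⟩ <;> linarith
    _ = (Set.Ioi s).indicator (fun x => (x - s) * f x) x := (Set.indicator_mul_left ..).symm

theorem truncated_first_moment_general {ε σ : ℝ} (hε : 0 < ε) (hσ : 0 < σ) {f : ℝ → ℝ}
    (hf1 : ∫ x, f x = 1) (hmean : ∫ x, x * f x = 0) (hvar : ∫ x, x ^ 2 * f x = σ ^ 2)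
    (hflc : ApproxLogConcave ε f) {s : ℝ} (hs : s ≤ ε * σ / 80) :
    ε * σ / 80 < ∫ x in Set.Ioi s, (x - s) * f x := by
  have hf : Integrable f := .of_integral_ne_zero (by simp [hf1])
  have hint : Integrable fun x => |x| * f x := integrable_abs_mul_of_integrable_sq_mul hf
    (.of_integral_ne_zero (by rw [hvar]; positivity))
  have habs : ε * σ / 20 < ∫ x, |x| * f x := by
    by_contra! hm
    exact (hflc.integral_sq_mul_lt hε hf1 hint hσ hm).ne hvar
  have htrunc := half_add_sub_max_mul_le_setIntegral_Ioi (hflc.nonneg_s16 hε.le) hf hint s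
  have hmax : max s 0 ≤ ε * σ / 80 := max_le hs (by positivity)
  rw [hmean, hf1] at htrunc
  linarith

/-- **Lemma 7.7.** For an isotropic `ε`-approximately log-concave density `f` on `ℝ` and
any `s ≤ ε/80`, the truncated first moment `∫_s^∞ (x - s) f(x) dx` exceeds `ε/80`. -/
theorem truncated_first_moment
    (ε : ℝ) (hε : ε ∈ Set.Ioo (0 : ℝ) (1 / 2))
    (f : ℝ → ℝ) (hfmeas : Measurable f) (hf0 : ∀ x, 0 ≤ f x)
    (hf1 : ∫ x, f x = 1) (hmean : ∫ x, x * f x = 0) (hvar : ∫ x, x ^ 2 * f x = 1)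
    (hflc : ApproxLogConcave ε f) :
    ∀ s : ℝ, s ≤ ε / 80 → ε / 80 < ∫ x in Set.Ioi s, (x - s) * f x := by
  intro s hs
  simpa using truncated_first_moment_general hε.1 one_pos hf1 hmean (by simpa using hvar) hflc
    (by simpa using hs)
end
end

section
/- Let ε ∈ (0,1), μ ∈ [ε, 1], and define the kernel K on [0,1] × [0,1] by K(x,y) = 1{x ∈ [y,μ]}/|y − μ| if |y − μ| ≥ ε (where [y,μ] denotes the segment between y and μ), and K(x,y) = 1{x ∈ [μ−ε, μ]}/ε if |y − μ| < ε. For a probability measure p on [0,1] set Kp(x) = ∫ K(x,y) dp(y) and K^(2)p(x) = ∫ K(x,y)² dp(y). Then for every probability measure p on [0,1], one has ∫₀¹ K^(2)p(x)/(Kp(x)) dx ≤ 2·(1 + log(1/ε)) (the integrand being interpreted as 0 where Kp(x) = 0). -/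
open MeasureTheory Real

noncomputable section

/-- The one-dimensional kernel of Section 3: `K(x,y)` is the density (in `x`) of the
uniform distribution on the segment `[y, μ]` if `|y - μ| ≥ ε`, and of the uniform
distribution on `[μ - ε, μ]` otherwise. -/
def kernel1d (ε μ : ℝ) (x y : ℝ) : ℝ :=
  if ε ≤ |y - μ| then (Set.uIcc y μ).indicator 1 x / |y - μ|
  else (Set.Icc (μ - ε) μ).indicator 1 x / ε

/-!
The kernel is dominated by `c x = 1 / max |x - μ| ε`, whatever `y` is. Hence `K² ≤ c x * K`, so the
quotient `K⁽²⁾p x / Kp x` is at most `c x` for every `p`, and it remains to integrate `c`. As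
`μ ∈ [0, 1]`, the interval `[0, 1]` lies in `[μ - 1, μ + 1]`, over which `c` integrates to
`2 * (1 + log (1 / ε))`: on either side of `μ`, the part within `ε` of `μ` contributes `1` and the
rest contributes `log (1 / ε)`.
-/

section IntegralRatio

variable {α : Type*} [MeasurableSpace α] {p : Measure α} {f : α → ℝ} {c : ℝ}

lemma integral_sq_le_mul_integral (hint : Integrable f p) (hf : ∀ y, 0 ≤ f y)
    (hfc : ∀ y, f y ≤ c) : ∫ y, f y ^ 2 ∂p ≤ c * ∫ y, f y ∂p := by
  rw [← integral_const_mul]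
  refine integral_mono_of_nonneg (.of_forall fun y => sq_nonneg _) (hint.const_mul c)
    (.of_forall fun y => ?_)
  simpa only [sq] using mul_le_mul_of_nonneg_right (hfc y) (hf y)

lemma integral_sq_div_integral_le (hint : Integrable f p) (hc : 0 ≤ c) (hf : ∀ y, 0 ≤ f y)
    (hfc : ∀ y, f y ≤ c) : (∫ y, f y ^ 2 ∂p) / ∫ y, f y ∂p ≤ c :=
  div_le_of_le_mul₀ (integral_nonneg hf) hc (integral_sq_le_mul_integral hint hf hfc)

end IntegralRatio

lemma intervalIntegral_comp_abs {f : ℝ → ℝ} {a : ℝ} (ha : 0 ≤ a)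
    (hf : IntervalIntegrable f volume 0 a) :
    ∫ t in -a..a, f |t| = 2 * ∫ t in (0 : ℝ)..a, f t := by
  have hcongr : Set.EqOn (fun t => f |t|) f (Set.uIcc 0 a) := fun t ht => by
    rw [Set.uIcc_of_le ha] at ht
    simp only [abs_of_nonneg ht.1]
  have hright : IntervalIntegrable (fun t => f |t|) volume 0 a :=
    hf.congr fun t ht => (hcongr (Set.uIoc_subset_uIcc ht)).symm
  have hleft : IntervalIntegrable (fun t => f |t|) volume (-a) 0 := by
    simpa using ((IntervalIntegrable.iff_comp_neg (by simp)).1 hright).symm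
  have hneg : ∫ t in -a..0, f |t| = ∫ t in (0 : ℝ)..a, f |t| := by
    simpa using (intervalIntegral.integral_comp_neg (a := 0) (b := a) fun t => f |t|).symm
  rw [← intervalIntegral.integral_add_adjacent_intervals hleft hright, hneg,
    intervalIntegral.integral_congr hcongr, two_mul]

section Majorant

variable {ε : ℝ} (hε : 0 < ε)

include hε

lemma continuous_inv_max {X : Type*} [TopologicalSpace X] {f : X → ℝ} (hf : Continuous f) :
    Continuous fun x => (max (f x) ε)⁻¹ :=
  (hf.max continuous_const).inv₀ fun _ => (lt_max_of_lt_right hε).ne'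

lemma inv_max_pos (t : ℝ) : 0 < (max t ε)⁻¹ :=
  inv_pos.2 (lt_max_of_lt_right hε)

lemma integral_inv_max {a : ℝ} (ha : ε ≤ a) :
    ∫ t in (0 : ℝ)..a, (max t ε)⁻¹ = 1 + log (a / ε) := by
  have hint (u v : ℝ) : IntervalIntegrable (fun t => (max t ε)⁻¹) volume u v :=
    (continuous_inv_max hε continuous_id).intervalIntegrable u v
  have hinner : ∫ t in (0 : ℝ)..ε, (max t ε)⁻¹ = 1 := calc
    _ = ∫ _ in (0 : ℝ)..ε, ε⁻¹ := intervalIntegral.integral_congr fun t ht => by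
      rw [Set.uIcc_of_le hε.le] at ht
      simp only [max_eq_right ht.2]
    _ = 1 := by
      rw [intervalIntegral.integral_const, sub_zero, smul_eq_mul, mul_inv_cancel₀ hε.ne']
  have houter : ∫ t in ε..a, (max t ε)⁻¹ = log (a / ε) := calc
    _ = ∫ t in ε..a, t⁻¹ := intervalIntegral.integral_congr fun t ht => by
      rw [Set.uIcc_of_le ha] at ht
      simp only [max_eq_left ht.1]
    _ = log (a / ε) := integral_inv_of_pos hε (hε.trans_le ha)
  rw [← intervalIntegral.integral_add_adjacent_intervals (hint 0 ε) (hint ε a), hinner, houter]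

lemma integral_inv_max_abs {a : ℝ} (ha : ε ≤ a) :
    ∫ t in -a..a, (max |t| ε)⁻¹ = 2 * (1 + log (a / ε)) := by
  rw [intervalIntegral_comp_abs (f := fun t => (max t ε)⁻¹) (hε.le.trans ha)
    ((continuous_inv_max hε continuous_id).intervalIntegrable 0 a), integral_inv_max hε ha]

lemma integral_inv_max_abs_sub_le {a b c : ℝ} (hc : c ∈ Set.Icc a b) (hab : ε ≤ b - a) :
    ∫ x in a..b, (max |x - c| ε)⁻¹ ≤ 2 * (1 + log ((b - a) / ε)) := calc
  _ ≤ ∫ x in (-(b - a) + c)..(b - a + c), (max |x - c| ε)⁻¹ :=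
    intervalIntegral.integral_mono_interval (by linarith [hc.2]) (hc.1.trans hc.2)
      (by linarith [hc.1]) (.of_forall fun x => (inv_max_pos hε |x - c|).le)
      ((continuous_inv_max hε (by fun_prop)).intervalIntegrable _ _)
  _ = ∫ t in -(b - a)..(b - a), (max |t| ε)⁻¹ := by
    rw [intervalIntegral.integral_comp_sub_right fun t => (max |t| ε)⁻¹, add_sub_cancel_right,
      add_sub_cancel_right]
  _ = 2 * (1 + log ((b - a) / ε)) := integral_inv_max_abs hε hab

end Majorant

lemma indicator_one_div_le_inv {α : Type*} {s : Set α} {x : α} {m r : ℝ} (hm : 0 < m)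
    (h : x ∈ s → m ≤ r) : s.indicator 1 x / r ≤ m⁻¹ := by
  by_cases hx : x ∈ s
  · rw [Set.indicator_of_mem hx, Pi.one_apply, one_div]
    exact inv_anti₀ hm (h hx)
  · rw [Set.indicator_of_notMem hx, zero_div]
    exact (inv_pos.2 hm).le

lemma kernel1d_nonneg {ε : ℝ} (hε : 0 ≤ ε) (μ x y : ℝ) : 0 ≤ kernel1d ε μ x y := by
  have hindicator (s : Set ℝ) : 0 ≤ s.indicator (1 : ℝ → ℝ) x :=
    Set.indicator_nonneg (fun _ _ => zero_le_one) x
  unfold kernel1d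
  split_ifs
  · exact div_nonneg (hindicator _) (abs_nonneg _)
  · exact div_nonneg (hindicator _) hε

lemma kernel1d_le_inv_max {ε : ℝ} (hε : 0 < ε) (μ x y : ℝ) :
    kernel1d ε μ x y ≤ (max |x - μ| ε)⁻¹ := by
  have hmax : 0 < max |x - μ| ε := lt_max_of_lt_right hε
  unfold kernel1d
  split_ifs with hy
  · refine indicator_one_div_le_inv hmax fun hx => max_le ?_ hy
    exact Set.abs_sub_left_of_mem_uIcc (Set.uIcc_comm y μ ▸ hx)
  · refine indicator_one_div_le_inv hmax fun hx => max_le ?_ le_rfl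
    exact abs_le.2 ⟨by linarith [hx.1], by linarith [hx.2]⟩

lemma measurable_kernel1d (ε μ x : ℝ) : Measurable (kernel1d ε μ x) := by
  have hsegment : MeasurableSet {y | x ∈ Set.uIcc y μ} :=
    (measurableSet_le (measurable_id.min measurable_const) measurable_const).inter
      (measurableSet_le measurable_const (measurable_id.max measurable_const))
  have hindicator : Measurable fun y => (Set.uIcc y μ).indicator (1 : ℝ → ℝ) x := by
    classical
    simpa only [Set.indicator_apply] using
      Measurable.ite hsegment measurable_const measurable_const
  exact .ite (measurableSet_le measurable_const (by fun_prop)) (hindicator.div (by fun_prop))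
    measurable_const

lemma integrable_kernel1d {ε : ℝ} (hε : 0 < ε) (μ x : ℝ) (p : Measure ℝ) [IsFiniteMeasure p] :
    Integrable (kernel1d ε μ x) p :=
  .of_mem_Icc 0 (max |x - μ| ε)⁻¹ (measurable_kernel1d ε μ x).aemeasurable
    (.of_forall fun y => ⟨kernel1d_nonneg hε.le μ x y, kernel1d_le_inv_max hε μ x y⟩)

theorem kernel1d_variance_bound_general {ε μ : ℝ} (hε : 0 < ε) (hε1 : ε ≤ 1)
    (hμ : μ ∈ Set.Icc (0 : ℝ) 1) (p : Measure ℝ) [IsFiniteMeasure p] :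
    ∫ x in Set.Icc (0 : ℝ) 1,
        (∫ y, kernel1d ε μ x y ^ 2 ∂p) / ∫ y, kernel1d ε μ x y ∂p
      ≤ 2 * (1 + log (1 / ε)) := by
  have hratio_nonneg (x : ℝ) :
      0 ≤ (∫ y, kernel1d ε μ x y ^ 2 ∂p) / ∫ y, kernel1d ε μ x y ∂p :=
    div_nonneg (integral_nonneg fun y => sq_nonneg _)
      (integral_nonneg (kernel1d_nonneg hε.le μ x))
  have hratio_le (x : ℝ) :
      (∫ y, kernel1d ε μ x y ^ 2 ∂p) / ∫ y, kernel1d ε μ x y ∂p ≤ (max |x - μ| ε)⁻¹ :=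
    integral_sq_div_integral_le (integrable_kernel1d hε μ x p) (inv_max_pos hε _).le
      (kernel1d_nonneg hε.le μ x) (kernel1d_le_inv_max hε μ x)
  calc
    _ ≤ ∫ x in Set.Icc (0 : ℝ) 1, (max |x - μ| ε)⁻¹ :=
      integral_mono_of_nonneg (.of_forall hratio_nonneg)
        (continuous_inv_max hε (by fun_prop)).integrableOn_Icc (.of_forall hratio_le)
    _ = ∫ x in (0 : ℝ)..1, (max |x - μ| ε)⁻¹ := by
      rw [intervalIntegral.integral_of_le zero_le_one, integral_Icc_eq_integral_Ioc]
    _ ≤ 2 * (1 + log (1 / ε)) := by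
      simpa only [sub_zero] using integral_inv_max_abs_sub_le hε hμ (by rwa [sub_zero])

/-- **Variance bound for the one-dimensional kernel (Section 3).** For every probability
measure `p` on `[0,1]`, `∫₀¹ K⁽²⁾p(x) / Kp(x) dx ≤ 2(1 + log(1/ε))` (with the convention
that the integrand is `0` where `Kp(x) = 0`, which is Lean's convention for `·/0`). -/
theorem kernel1d_variance_bound
    (ε μ : ℝ) (hε : ε ∈ Set.Ioo (0 : ℝ) 1) (hμ : μ ∈ Set.Icc ε 1)
    (p : Measure ℝ) [IsProbabilityMeasure p] (hpsupp : p (Set.Icc (0 : ℝ) 1)ᶜ = 0) :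
    ∫ x in Set.Icc (0 : ℝ) 1,
        (∫ y, kernel1d ε μ x y ^ 2 ∂p) / ∫ y, kernel1d ε μ x y ∂p
      ≤ 2 * (1 + Real.log (1 / ε)) :=
  kernel1d_variance_bound_general hε.1 hε.2.le ⟨hε.1.le.trans hμ.1, hμ.2⟩ p
end
end
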